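/- Let G = (V,E) be a DAMG, R a commutative ring, and q : E → R a normalized weight function with total path weight function s. Let X ⊆ V be a subset and y ∈ V an element such that every directed path in G from a root of G to y contains exactly one element of X. Then Σ_{x ∈ X} s(x|y) = 1. In particular, Σ_{r ∈ Rt(G)} s(r|y) = 1 for every y ∈ V. -/

import Mathlib

open scoped Classical

/-- A directed multigraph: finite sets of vertices/edges with tail and head maps. -/
structure MGraph (V E : Type*) where
  tl : E → V
  hd : E → V

namespace MGraph

variable {V E R A : Type*}

/-- `G` is a directed acyclic multigraph (DAMG) if it admits a topological ordering,
i.e. a linear (injective) order on the vertices such that tails precede heads. -/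
def IsDAMG (G : MGraph V E) : Prop :=
  ∃ ord : V → ℕ, Function.Injective ord ∧ ∀ e : E, ord (G.tl e) < ord (G.hd e)

/-- `G.IsPath x y l` : the list of edges `l` is a directed path from `x` to `y`. -/
def IsPath (G : MGraph V E) : V → V → List E → Prop
  | x, y, [] => x = y
  | x, y, e :: es => G.tl e = x ∧ G.IsPath (G.hd e) y es

/-- the set `E(x,y)` of edges from `x` to `y` -/
def edges (G : MGraph V E) (x y : V) : Set E := {e | G.tl e = x ∧ G.hd e = y}

/-- there is a directed path from `x` to `y` (possibly trivial) -/
def Reaches (G : MGraph V E) (x y : V) : Prop := ∃ l : List E, G.IsPath x y l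

/-- ancestors of `y` (including `y`) -/
def anc (G : MGraph V E) (y : V) : Set V := {x | G.Reaches x y}

/-- descendants of `x` (including `x`) -/
def desc (G : MGraph V E) (x : V) : Set V := {y | G.Reaches x y}

/-- parents of `y` -/
def pa (G : MGraph V E) (y : V) : Set V := {x | ∃ e : E, G.tl e = x ∧ G.hd e = y}

/-- roots (sources) of `G` -/
def roots (G : MGraph V E) : Set V := {x | G.pa x = ∅}

/-- leaves (sinks) of `G` -/
def leaves (G : MGraph V E) : Set V := {x | ∀ e : E, G.tl e ≠ x}

/-- `π(x,y)` : the number of directed paths from `x` to `y` -/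
noncomputable def nPaths (G : MGraph V E) (x y : V) : ℕ :=
  {l : List E | G.IsPath x y l}.ncard

/-- `π(y)` : the number of directed paths from roots to `y` -/
noncomputable def nPathsRt (G : MGraph V E) (y : V) : ℕ :=
  ∑ᶠ r ∈ G.roots, G.nPaths r y

/-- pairwise weight `q(x|y) := Σ_{e ∈ E(x,y)} q(e)` -/
noncomputable def pw [AddCommMonoid R] (G : MGraph V E) (q : E → R) (x y : V) : R :=
  ∑ᶠ e ∈ G.edges x y, q e

/-- a weight function is normalized if pairwise weights into any non-root sum to 1 -/
def Normalized [CommRing R] (G : MGraph V E) (q : E → R) : Prop :=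
  ∀ y : V, y ∉ G.roots → (∑ᶠ x : V, G.pw q x y) = 1

/-- `w` is the Möbius transform (synergy function) of `v` w.r.t. `G` -/
def IsMoebiusTransform [AddCommGroup A] (G : MGraph V E) (v w : V → A) : Prop :=
  ∀ x : V, w x = v x - ∑ᶠ y ∈ G.anc x \ {x}, w y

/-- `μ` is the Möbius function of `G` -/
def IsMoebiusFunction (G : MGraph V E) (μ : V → V → ℤ) : Prop :=
  (∀ x y : V, x ∉ G.anc y → μ x y = 0) ∧
  (∀ x : V, μ x x = 1) ∧
  (∀ x y : V, x ∈ G.anc y → x ≠ y →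
    μ x y = -(∑ᶠ z ∈ (G.desc x ∩ G.anc y) \ {y}, μ x z))

/-- `s` is the total path weight function of the edge weight function `q` -/
def IsTotalWeight [CommRing R] (G : MGraph V E) (q : E → R) (s : V → V → R) : Prop :=
  (∀ x y : V, y ∉ G.desc x → s x y = 0) ∧
  (∀ x : V, s x x = 1) ∧
  (∀ x y : V, y ∈ G.desc x → y ≠ x → s x y = ∑ᶠ z ∈ G.pa y, s x z * G.pw q z y)

/-- `τ : V → R` is the extension of a root weight function via the recursion
`τ(y) = Σ_{z ∈ Pa(y)} τ(z)·ς(z,y)` for non-roots `y` -/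
def IsRootExtension [CommRing R] (G : MGraph V E) (ς : E → R) (τ : V → R) : Prop :=
  ∀ y : V, y ∉ G.roots → τ y = ∑ᶠ z ∈ G.pa y, τ z * G.pw ς z y

/-- the list of vertices visited by a path starting at `x` -/
def pathVerts (G : MGraph V E) (x : V) (l : List E) : List V := x :: l.map G.hd

/-- `X` is a horizontal subset of `G` : every directed path from a root to a leaf
contains exactly one element of `X` -/
def Horizontal (G : MGraph V E) (X : Set V) : Prop :=
  ∀ r ∈ G.roots, ∀ lf ∈ G.leaves, ∀ p : List E, G.IsPath r lf p →
    (G.pathVerts r p).countP (fun v => decide (v ∈ X)) = 1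

/-- the path uniform weight function `q_G(e) := π(t(e))/π(h(e))` -/
noncomputable def pathUniform (G : MGraph V E) : E → ℚ :=
  fun e => (G.nPathsRt (G.tl e) : ℚ) / (G.nPathsRt (G.hd e) : ℚ)

/-- the unanimity value function centred at `y` -/
noncomputable def zeta [CommRing R] (G : MGraph V E) (y : V) : V → R :=
  fun x => if x ∈ G.desc y then (1 : R) else 0

/-! ### Projection onto the complement of a single element -/

/-- the edge type of the projection `G^{∖z}` :
old edges avoiding `z`, together with a new edge for every pair of edges through `z` -/
def proj1E (G : MGraph V E) (z : V) : Type _ :=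
  {e : E // G.tl e ≠ z ∧ G.hd e ≠ z} ⊕
  {p : E × E // G.hd p.1 = z ∧ G.tl p.2 = z ∧ G.tl p.1 ≠ z ∧ G.hd p.2 ≠ z}

/-- the projection `G^{∖z}` of `G` onto the complement of `z` -/
def proj1 (G : MGraph V E) (z : V) : MGraph {x : V // x ≠ z} (G.proj1E z) where
  tl := Sum.elim (fun e => ⟨G.tl e.1, e.2.1⟩) (fun p => ⟨G.tl p.1.1, p.2.2.2.1⟩)
  hd := Sum.elim (fun e => ⟨G.hd e.1, e.2.2⟩) (fun p => ⟨G.hd p.1.2, p.2.2.2.2⟩)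

/-- the projected weight function `q^{∖z}` -/
def proj1Q [CommRing R] (G : MGraph V E) (z : V) (q : E → R) : G.proj1E z → R :=
  Sum.elim (fun e => q e.1) (fun p => q p.1.1 * q p.1.2)

/-- the single-element projection `w^{∖z}(x) := w(x) + q(x|z)·w(z)` of a synergy function -/
noncomputable def wProjOne [CommRing R] [AddCommGroup A] [Module R A]
    (G : MGraph V E) (q : E → R) (w : V → A) (z : V) : {x : V // x ≠ z} → A :=
  fun x => w x.1 + G.pw q x.1 z • w z

/-! ### Projection onto the complement of a subset -/

/-- consecutive edges of the list compose -/
def IsChain (G : MGraph V E) : List E → Prop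
  | [] => True
  | [_] => True
  | e :: e' :: es => G.hd e = G.tl e' ∧ G.IsChain (e' :: es)

/-- the interior vertices of a path (all visited vertices except the endpoints) -/
def interior (G : MGraph V E) : List E → List V
  | [] => []
  | [_] => []
  | e :: e' :: es => G.hd e :: G.interior (e' :: es)

/-- an edge of the projection `G^{∖S}` : a nonempty directed path of `G` whose
interior vertices lie in `S` and whose endpoints lie outside `S`
(iterating `E^{∖z}(x,y) := E(x,y) ⊔ (E(x,z) × E(z,y))` over the elements of `S`) -/
structure ProjEdge (G : MGraph V E) (S : Set V) where
  first : E
  rest : List E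
  chain : G.IsChain (first :: rest)
  tl_notin : G.tl first ∉ S
  hd_notin : G.hd ((first :: rest).getLast (List.cons_ne_nil _ _)) ∉ S
  interior_mem : ∀ v ∈ G.interior (first :: rest), v ∈ S

/-- the projection `G^{∖S}` of `G` onto the complement of the subset `S` -/
def projG (G : MGraph V E) (S : Set V) : MGraph {x : V // x ∉ S} (G.ProjEdge S) where
  tl := fun p => ⟨G.tl p.first, p.tl_notin⟩
  hd := fun p => ⟨G.hd ((p.first :: p.rest).getLast (List.cons_ne_nil _ _)), p.hd_notin⟩

/-- the projected weight function `q^{∖S}` (weights multiply along collapsed paths) -/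
def projQ [CommRing R] (G : MGraph V E) (S : Set V) (q : E → R) :
    G.ProjEdge S → R :=
  fun p => ((p.first :: p.rest).map q).prod

/-! ### Iterated one-element projections of pairwise weights and synergy functions -/

/-- one projection step on pairwise weights: `q^{∖z}(x|y) = q(x|y) + q(x|z)·q(z|y)` -/
def pwStep [CommRing R] (Q : V → V → R) (z : V) : V → V → R :=
  fun x y => Q x y + Q x z * Q z y

/-- one projection step on a synergy function: `w^{∖z}(x) = w(x) + q(x|z)·w(z)` -/
def wStep [CommRing R] [AddCommGroup A] [Module R A]
    (Q : V → V → R) (w : V → A) (z : V) : V → A :=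
  fun x => w x + Q x z • w z

/-- iterated one-element projections along a list of vertices -/
def projIter [CommRing R] [AddCommGroup A] [Module R A] :
    List V → (V → V → R) → (V → A) → ((V → V → R) × (V → A))
  | [], Q, w => (Q, w)
  | z :: zs, Q, w => projIter zs (pwStep Q z) (wStep Q w z)

/-! ### Subgraph on a subset of vertices -/

/-- edges of `G` with both endpoints in `S` -/
def subE (G : MGraph V E) (S : Set V) : Type _ := {e : E // G.tl e ∈ S ∧ G.hd e ∈ S}

/-- the subgraph of `G` on the vertex subset `S` -/
def subgraph (G : MGraph V E) (S : Set V) : MGraph ↥S (G.subE S) where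
  tl := fun e => ⟨G.tl e.1, e.2.1⟩
  hd := fun e => ⟨G.hd e.1, e.2.2⟩

/-- the canonical identification `(V∖{z})∖{u} ≃ (V∖{u})∖{z}` -/
def swapCompl (z u : V) (hzu : z ≠ u) :
    {y : {x : V // x ≠ z} // y ≠ ⟨u, Ne.symm hzu⟩} ≃
      {y : {x : V // x ≠ u} // y ≠ ⟨z, hzu⟩} where
  toFun y := ⟨⟨y.1.1, fun h => y.2 (Subtype.ext h)⟩, fun h => y.1.2 (congrArg Subtype.val h)⟩
  invFun y := ⟨⟨y.1.1, fun h => y.2 (Subtype.ext h)⟩, fun h => y.1.2 (congrArg Subtype.val h)⟩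
  left_inv y := rfl
  right_inv y := rfl

end MGraph

/-!
The proof is by well-founded induction on `y` along the parent relation. If `y ∈ X`, then `y` is
reachable from no other `x ∈ X`: extending backwards to a root would give a path meeting `X` twice.
So only `s(y|y) = 1` survives. If `y ∉ X`, then every parent of `y` inherits the hypothesis, and
the recursion for `s` gives `Σ_{x ∈ X} s(x|y) = Σ_z (Σ_{x ∈ X} s(x|z)) · q(z|y) = Σ_z q(z|y) = 1`.

The two sums can be exchanged because all supports are finite: a `finsum` with infinite support is
`0`, so normalization forces `q(·|y)` to have finite support (unless `R` is trivial), and by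
induction so does `s(·|y)`.
-/

theorem finsum_finsum_mul_comm {α β R : Type*} [NonUnitalNonAssocSemiring R]
    {f : α → β → R} {g : β → R} (hf : ∀ b, Function.HasFiniteSupport fun a => f a b)
    (hg : Function.HasFiniteSupport g) :
    ∑ᶠ a, ∑ᶠ b, f a b * g b = ∑ᶠ b, (∑ᶠ a, f a b) * g b := by
  have hsupp (c : β → R) : (Function.support fun b => c b * g b) ⊆ hg.toFinset :=
    fun _ hb => hg.mem_toFinset.2 (right_ne_zero_of_mul hb)
  calc ∑ᶠ a, ∑ᶠ b, f a b * g b = ∑ᶠ a, ∑ b ∈ hg.toFinset, f a b * g b :=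
        finsum_congr fun a => finsum_eq_sum_of_support_subset _ (hsupp (f a))
    _ = ∑ b ∈ hg.toFinset, ∑ᶠ a, f a b * g b :=
        finsum_sum_comm _ _ fun b _ => (hf b).subset (Function.support_mul_subset_left _ _)
    _ = ∑ b ∈ hg.toFinset, (∑ᶠ a, f a b) * g b :=
        Finset.sum_congr rfl fun b _ => (finsum_mul' _ _ (hf b)).symm
    _ = ∑ᶠ b, (∑ᶠ a, f a b) * g b := (finsum_eq_sum_of_support_subset _ (hsupp _)).symm

namespace MGraph

section Paths

variable {V E : Type*} {G : MGraph V E} {x y z : V} {l l₁ l₂ : List E} {X : Set V}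

theorem IsPath.append (h₁ : G.IsPath x y l₁) (h₂ : G.IsPath y z l₂) :
    G.IsPath x z (l₁ ++ l₂) := by
  induction l₁ generalizing x with
  | nil => exact (show x = y from h₁) ▸ h₂
  | cons e es ih => exact ⟨h₁.1, ih h₁.2⟩

theorem exists_isPath_singleton_of_mem_pa (h : x ∈ G.pa y) :
    ∃ e : E, G.hd e = y ∧ G.IsPath x y [e] :=
  let ⟨e, htl, hhd⟩ := h
  ⟨e, hhd, htl, hhd⟩

theorem pathVerts_append (G : MGraph V E) (x : V) (l₁ l₂ : List E) :
    G.pathVerts x (l₁ ++ l₂) = G.pathVerts x l₁ ++ l₂.map G.hd := by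
  simp only [pathVerts, List.map_append, List.cons_append]

theorem IsPath.target_mem_pathVerts (h : G.IsPath x y l) : y ∈ G.pathVerts x l := by
  induction l generalizing x with
  | nil => exact List.mem_singleton.2 (show x = y from h).symm
  | cons e es ih => exact List.mem_cons_of_mem x (ih h.2)

theorem IsPath.target_mem_map_hd (h : G.IsPath x y l) (hxy : x ≠ y) : y ∈ l.map G.hd :=
  (List.mem_cons.1 h.target_mem_pathVerts).resolve_left hxy.symm

theorem mem_desc_of_mem_pa (hz : z ∈ G.pa y) (hxz : z ∈ G.desc x) : y ∈ G.desc x :=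
  let ⟨_, hp⟩ := hxz
  let ⟨_, _, he⟩ := exists_isPath_singleton_of_mem_pa hz
  ⟨_, hp.append he⟩

theorem hd_notMem_roots (G : MGraph V E) (e : E) : G.hd e ∉ G.roots :=
  fun h => Set.eq_empty_iff_forall_notMem.1 h (G.tl e) ⟨e, rfl, rfl⟩

theorem IsDAMG.wellFounded_pa (hG : G.IsDAMG) : WellFounded fun x y => x ∈ G.pa y := by
  obtain ⟨ord, -, hord⟩ := hG
  refine Subrelation.wf ?_ (measure ord).wf
  rintro _ _ ⟨e, rfl, rfl⟩
  exact hord e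

theorem exists_root_reaches (hG : WellFounded fun x y => x ∈ G.pa y) (y : V) :
    ∃ r ∈ G.roots, G.Reaches r y := by
  induction y using hG.induction with
  | _ y ih =>
    by_cases hy : y ∈ G.roots
    · exact ⟨y, hy, [], rfl⟩
    · obtain ⟨z, hz⟩ := Set.nonempty_iff_ne_empty.2 hy
      obtain ⟨r, hr, hrz⟩ := ih z hz
      exact ⟨r, hr, mem_desc_of_mem_pa hz hrz⟩

/-- The variant of `MGraph.Horizontal` for a single target `y` in place of the leaves: every
directed path from a root to `y` contains exactly one element of `X`. -/
def HorizontalAt (G : MGraph V E) (X : Set V) (y : V) : Prop :=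
  ∀ r ∈ G.roots, ∀ p : List E, G.IsPath r y p →
    (G.pathVerts r p).countP (fun v => decide (v ∈ X)) = 1

theorem horizontalAt_roots (G : MGraph V E) (y : V) : G.HorizontalAt G.roots y := by
  intro r hr p _
  have hp : (p.map G.hd).countP (fun v => decide (v ∈ G.roots)) = 0 := by
    simp only [List.countP_map, List.countP_eq_zero, Function.comp_apply, decide_eq_true_eq]
    exact fun e _ => G.hd_notMem_roots e
  rw [pathVerts, List.countP_cons, hp, if_pos (decide_eq_true hr)]

namespace HorizontalAt

theorem notMem_roots (hX : G.HorizontalAt X y) (hy : y ∉ X) : y ∉ G.roots := by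
  intro hroot
  have hcount : [y].countP (fun v => decide (v ∈ X)) = 1 := hX y hroot [] rfl
  simp [hy] at hcount

theorem of_mem_pa (hX : G.HorizontalAt X y) (hy : y ∉ X) (hz : z ∈ G.pa y) :
    G.HorizontalAt X z := by
  intro r hr p hp
  obtain ⟨e, rfl, he⟩ := exists_isPath_singleton_of_mem_pa hz
  have hcount := hX r hr (p ++ [e]) (hp.append he)
  simpa [pathVerts_append, hy] using hcount

theorem notMem_desc (hG : WellFounded fun x y => x ∈ G.pa y) (hX : G.HorizontalAt X y)
    (hx : x ∈ X) (hy : y ∈ X) (hxy : x ≠ y) : y ∉ G.desc x := by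
  rintro ⟨l, hl⟩
  obtain ⟨r, hr, p, hp⟩ := exists_root_reaches hG x
  have hcount := hX r hr (p ++ l) (hp.append hl)
  rw [pathVerts_append, List.countP_append] at hcount
  have hx_count : 0 < (G.pathVerts r p).countP (fun v => decide (v ∈ X)) :=
    List.countP_pos_iff.2 ⟨x, hp.target_mem_pathVerts, decide_eq_true hx⟩
  have hy_count : 0 < (l.map G.hd).countP (fun v => decide (v ∈ X)) :=
    List.countP_pos_iff.2 ⟨y, hl.target_mem_map_hd hxy, decide_eq_true hy⟩
  lia

end HorizontalAt

end Paths

section Weights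

variable {V E R : Type*} {G : MGraph V E} {q : E → R} {x y z : V}

theorem pw_eq_zero_of_notMem_pa [AddCommMonoid R] (q : E → R) (hz : z ∉ G.pa y) :
    G.pw q z y = 0 :=
  finsum_mem_eq_zero_of_forall_eq_zero fun e he => absurd ⟨e, he⟩ hz

theorem finsum_mem_pa_mul_pw [NonUnitalNonAssocSemiring R] (G : MGraph V E) (q : E → R)
    (f : V → R) (y : V) : ∑ᶠ z ∈ G.pa y, f z * G.pw q z y = ∑ᶠ z, f z * G.pw q z y := by
  rw [finsum_mem_def, Set.indicator_eq_self.2]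
  refine Function.support_subset_iff'.2 fun z hz => ?_
  rw [pw_eq_zero_of_notMem_pa q hz, mul_zero]

variable [CommRing R] {s : V → V → R} {X : Set V}

theorem Normalized.hasFiniteSupport_pw (hq : G.Normalized q) (y : V) :
    Function.HasFiniteSupport fun z => G.pw q z y := by
  by_contra hinf
  have hy : y ∉ G.roots := fun hy => hinf <| Set.finite_empty.subset fun z hz =>
    hz (pw_eq_zero_of_notMem_pa q (Set.eq_empty_iff_forall_notMem.1 hy z))
  have hone : (0 : R) = 1 := (finsum_of_not_hasFiniteSupport hinf).symm.trans (hq y hy)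
  have := subsingleton_of_zero_eq_one hone
  exact hinf (Set.finite_empty.subset fun z hz => hz (Subsingleton.elim _ _))

namespace IsTotalWeight

theorem eq_finsum (hs : G.IsTotalWeight q s) (hxy : x ≠ y) :
    s x y = ∑ᶠ z, s x z * G.pw q z y := by
  obtain ⟨hs_zero, -, hs_rec⟩ := hs
  rw [← finsum_mem_pa_mul_pw]
  by_cases hy : y ∈ G.desc x
  · exact hs_rec x y hy hxy.symm
  · rw [hs_zero x y hy, finsum_mem_eq_zero_of_forall_eq_zero]
    intro z hz
    rw [hs_zero x z fun hxz => hy (mem_desc_of_mem_pa hz hxz), zero_mul]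

theorem hasFiniteSupport (hs : G.IsTotalWeight q s) (hG : WellFounded fun x y => x ∈ G.pa y)
    (hq : ∀ y, Function.HasFiniteSupport fun z => G.pw q z y) (y : V) :
    Function.HasFiniteSupport fun x => s x y := by
  induction y using hG.induction with
  | _ y ih =>
    have hfinite : (⋃ z ∈ Function.support fun z => G.pw q z y,
        Function.support fun x => s x z).Finite :=
      (hq y).biUnion fun z hz => ih z (not_imp_comm.1 (pw_eq_zero_of_notMem_pa q) hz)
    refine (hfinite.insert y).subset fun x hx => ?_
    rcases eq_or_ne x y with rfl | hxy
    · exact Set.mem_insert x _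
    · have hsum : ∑ᶠ z, s x z * G.pw q z y ≠ 0 := hs.eq_finsum hxy ▸ hx
      obtain ⟨z, hz⟩ := not_forall.1 (mt finsum_eq_zero_of_forall_eq_zero hsum)
      exact Set.mem_insert_of_mem _
        (Set.mem_biUnion (right_ne_zero_of_mul hz) (left_ne_zero_of_mul hz))

theorem finsum_mem_eq_finsum_mul_pw (hs : G.IsTotalWeight q s)
    (hG : WellFounded fun x y => x ∈ G.pa y)
    (hq : ∀ y, Function.HasFiniteSupport fun z => G.pw q z y) (hy : y ∉ X) :
    ∑ᶠ x ∈ X, s x y = ∑ᶠ z, (∑ᶠ x ∈ X, s x z) * G.pw q z y := by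
  have hX (z : V) : Function.HasFiniteSupport (X.indicator fun x => s x z) :=
    (hs.hasFiniteSupport hG hq z).subset (Set.support_indicator.trans_subset Set.inter_subset_right)
  have hrec (x : V) : X.indicator (fun x => s x y) x =
      ∑ᶠ z, X.indicator (fun x => s x z) x * G.pw q z y := by
    by_cases hx : x ∈ X
    · simpa only [Set.indicator_of_mem hx] using hs.eq_finsum (ne_of_mem_of_not_mem hx hy)
    · simp only [Set.indicator_of_notMem hx, zero_mul, finsum_zero]
  simp only [finsum_mem_def]
  rw [finsum_congr hrec, finsum_finsum_mul_comm hX (hq y)]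

theorem finsum_mem_eq_one (hs : G.IsTotalWeight q s) (hG : WellFounded fun x y => x ∈ G.pa y)
    (hq : G.Normalized q) (hX : G.HorizontalAt X y) : ∑ᶠ x ∈ X, s x y = 1 := by
  induction y using hG.induction with
  | _ y ih =>
    by_cases hy : y ∈ X
    · have hzero (x : V) (hxy : x ≠ y) : X.indicator (fun x => s x y) x = 0 :=
        Set.indicator_apply_eq_zero.2 fun hx => hs.1 x y (hX.notMem_desc hG hx hy hxy)
      rw [finsum_mem_def, finsum_eq_single _ y hzero, Set.indicator_of_mem hy, hs.2.1]
    · calc ∑ᶠ x ∈ X, s x y = ∑ᶠ z, (∑ᶠ x ∈ X, s x z) * G.pw q z y :=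
            hs.finsum_mem_eq_finsum_mul_pw hG hq.hasFiniteSupport_pw hy
        _ = ∑ᶠ z, G.pw q z y := finsum_congr fun z => by
            by_cases hz : z ∈ G.pa y
            · rw [ih z hz (hX.of_mem_pa hy hz), one_mul]
            · rw [pw_eq_zero_of_notMem_pa q hz, mul_zero]
        _ = 1 := hq y (hX.notMem_roots hy)

end IsTotalWeight

end Weights

end MGraph

theorem total_path_weights_normalized_general {V E R : Type*} [CommRing R] (G : MGraph V E)
    (hG : WellFounded fun x y => x ∈ G.pa y) (q : E → R) (hq : G.Normalized q)
    (s : V → V → R) (hs : G.IsTotalWeight q s) (X : Set V) (y : V) (hXy : G.HorizontalAt X y) :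
    (∑ᶠ x ∈ X, s x y) = 1 ∧ ∀ y' : V, (∑ᶠ r ∈ G.roots, s r y') = 1 :=
  ⟨hs.finsum_mem_eq_one hG hq hXy,
    fun y' => hs.finsum_mem_eq_one hG hq (G.horizontalAt_roots y')⟩

/-- **Normalization of total path weights.**
Let `q` be a normalized weight function on the DAMG `G` with total path weight
function `s`. If every directed path from a root of `G` to `y` contains exactly
one element of `X`, then `Σ_{x ∈ X} s(x|y) = 1`; in particular
`Σ_{r ∈ Rt(G)} s(r|y') = 1` for every `y' ∈ V`. -/
theorem total_path_weights_normalized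
    {V E R : Type*} [Finite V] [Finite E] [CommRing R]
    (G : MGraph V E) (hG : G.IsDAMG)
    (q : E → R) (hq : G.Normalized q)
    (s : V → V → R) (hs : G.IsTotalWeight q s)
    (X : Set V) (y : V)
    (hXy : ∀ r ∈ G.roots, ∀ p : List E, G.IsPath r y p →
      (G.pathVerts r p).countP (fun v => decide (v ∈ X)) = 1) :
    (∑ᶠ x ∈ X, s x y) = 1 ∧ (∀ y' : V, (∑ᶠ r ∈ G.roots, s r y') = 1) :=
  total_path_weights_normalized_general G hG.wellFounded_pa q hq s hs X y hXy
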